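/- Let P be a prime, J a positive integer, B a symplectic form on a 2J-dimensional vector space V over the field F_P, and Φ a symplectic ETF for B. If P > 2 then bin(Φ) is empty. If P = 2, then bin(Φ) consists exactly of the subsets of V of the form v + ({0} ∪ S), where v ∈ V and S ⊆ V satisfies #S = 2^J + 1 and B(v₁, v₂) = 1 for all v₁, v₂ ∈ S with v₁ ≠ v₂. -/

import Mathlib

open scoped BigOperators

noncomputable section

/-- ETF predicate. -/
def IsETF (𝕜 : Type*) {E ι : Type*} [RCLike 𝕜] [NormedAddCommGroup E]
    [InnerProductSpace 𝕜 E] [Fintype ι] (φ : ι → E) : Prop :=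
  (∃ S : ℝ, 0 < S ∧ ∀ n, (inner 𝕜 (φ n) (φ n) : 𝕜) = (S : 𝕜)) ∧
  (∃ C : ℝ, 0 < C ∧ ∀ n₁ n₂, n₁ ≠ n₂ → ‖(inner 𝕜 (φ n₁) (φ n₂) : 𝕜)‖ = C) ∧
  (∃ A : ℝ, 0 < A ∧ ∀ n₁ n₃,
      (∑ n₂, (inner 𝕜 (φ n₁) (φ n₂) : 𝕜) * (inner 𝕜 (φ n₂) (φ n₃) : 𝕜)) =
        (A : 𝕜) * (inner 𝕜 (φ n₁) (φ n₃) : 𝕜))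

/-- Regular simplex predicate for a subfamily. -/
def IsRegularSimplex (𝕜 : Type*) {E ι : Type*} [RCLike 𝕜] [NormedAddCommGroup E]
    [InnerProductSpace 𝕜 E] [Fintype ι] (φ : ι → E) (K : Finset ι) : Prop :=
  IsETF 𝕜 (fun k : K => φ k.1) ∧
  Module.finrank 𝕜 (Submodule.span 𝕜 (φ '' (K : Set ι))) + 1 = K.card

/-- The binder of a family. -/
def binder (𝕜 : Type*) {E ι : Type*} [RCLike 𝕜] [NormedAddCommGroup E]
    [InnerProductSpace 𝕜 E] [Fintype ι] (φ : ι → E) : Set (Finset ι) :=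
  {K | IsRegularSimplex 𝕜 φ K}

/-- A bilinear form is symplectic: alternating and nondegenerate. -/
def IsSymplectic {F V : Type*} [CommRing F] [AddCommGroup V] [Module F V]
    (B : V →ₗ[F] V →ₗ[F] F) : Prop :=
  (∀ v, B v v = 0) ∧ ∀ v : V, v ≠ 0 → ∃ w, B v w ≠ 0

/-!
A family with Gram matrix `G` and frame constant `a` satisfies `G ^ 2 = a • G`, so the ranks of `G`
and of `a • 1 - G` add up to the number of vectors: an equiangular tight frame is a regular simplex
exactly when `a • 1 - G` has rank one. If `G` has diagonal entries `S` and off-diagonal entries of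
modulus `C`, comparing `2 × 2` minors turns this into `S = (N - 1) * C`, with `N` the number of
vectors, together with the condition that all triple products of distinct vectors equal `-C ^ 3`.

For a symplectic ETF the triple product at `u, v, w` is `χ (B (u - w) (v - w))` for an additive
character `χ` of `ZMod P`. It is a `P`-th root of unity, hence never `-1` for odd `P`; for `P = 2`
it is `-1` when `B (u - w) (v - w) = 1`. That quantity is the sum of `B` over the edges of the
triangle `u, v, w`, and the sum of the values of the four triangles in a tetrahedron vanishes over
`ZMod 2`, so it is enough to test the triangles through one fixed point.
-/

section MatrixRank

variable {K m n : Type*} [Field K] [Fintype n]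

lemma matrix_rank_eq_zero_iff [Finite m] {M : Matrix m n K} : M.rank = 0 ↔ M = 0 := by
  rw [M.rank_eq_finrank_span_cols, Submodule.finrank_eq_zero, Submodule.span_eq_bot,
    Set.forall_mem_range]
  exact ⟨fun h => Matrix.ext fun i j => congrFun (h j) i, fun h j => by rw [h]; rfl⟩

lemma matrix_rank_add_le (M N : Matrix m n K) : (M + N).rank ≤ M.rank + N.rank := by
  rw [Matrix.rank, Matrix.mulVecLin_add]
  exact (Submodule.finrank_mono (LinearMap.range_add_le _ _)).trans
    (Submodule.finrank_add_le_finrank_add_finrank _ _)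

lemma matrix_rank_le_one_iff [Finite m] {M : Matrix m n K} :
    M.rank ≤ 1 ↔ ∀ i j k l, M i j * M k l = M i l * M k j := by
  constructor
  · intro h i j k l
    rw [M.rank_eq_finrank_span_cols, finrank_le_one_iff] at h
    obtain ⟨⟨x, _⟩, hx⟩ := h
    have hcol : ∀ j, ∃ t : K, ∀ i, t * x i = M i j := fun j => by
      obtain ⟨t, ht⟩ := hx ⟨M.col j, Submodule.subset_span ⟨j, rfl⟩⟩
      exact ⟨t, congrFun (congrArg Subtype.val ht)⟩
    choose t ht using hcol
    simp only [← ht]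
    ring
  · intro h
    by_cases hM : M = 0
    · simp [hM]
    obtain ⟨k, l, hkl⟩ : ∃ k l, M k l ≠ 0 := by
      by_contra! h0
      exact hM (Matrix.ext h0)
    have hvec : M = Matrix.vecMulVec (fun i => M i l) (fun j => M k j / M k l) := by
      ext i j
      rw [Matrix.vecMulVec_apply, ← mul_div_assoc, ← h, mul_div_cancel_right₀ _ hkl]
    rw [hvec]
    exact Matrix.rank_vecMulVec_le _ _

lemma matrix_rank_le_one_iff_of_diag_eq {M : Matrix n n K} {c : K} (hc : c ≠ 0)
    (hdiag : ∀ i, M i i = c) : M.rank ≤ 1 ↔ ∀ i j k, M i j * M j k = c * M i k := by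
  rw [matrix_rank_le_one_iff]
  constructor
  · intro h i j k
    rw [h, hdiag, mul_comm]
  · intro h i j k l
    refine mul_left_cancel₀ hc ?_
    calc c * (M i j * M k l) = M i k * M k j * M k l := by rw [h, mul_assoc]
      _ = M i k * M k l * M k j := by ring
      _ = c * (M i l * M k j) := by rw [h, mul_assoc]

lemma matrix_rank_add_rank_eq_card [DecidableEq n] {M N : Matrix n n K} {a : K} (ha : a ≠ 0)
    (hmul : M * N = 0) (hadd : M + N = a • 1) : M.rank + N.rank = Fintype.card n := by
  refine le_antisymm (Matrix.rank_add_rank_le_card_of_mul_eq_zero hmul) ?_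
  calc Fintype.card n = (a • (1 : Matrix n n K)).rank := by
        rw [Matrix.rank_smul_of_mem_nonZeroDivisors _ (mem_nonZeroDivisors_of_ne_zero ha),
          Matrix.rank_one]
    _ ≤ M.rank + N.rank := hadd ▸ matrix_rank_add_le M N

end MatrixRank

section Gram

variable {𝕜 E ι : Type*} [RCLike 𝕜] [NormedAddCommGroup E] [InnerProductSpace 𝕜 E]

/-- The matrix `a • 1 - G`, with `G` the Gram matrix of `ψ`. When `ψ` is a tight frame with
constant `a`, this is the Gram matrix of a Naimark complement of `ψ`. -/
def naimarkGram [DecidableEq ι] (a : 𝕜) (ψ : ι → E) : Matrix ι ι 𝕜 :=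
  a • 1 - Matrix.gram 𝕜 ψ

lemma naimarkGram_apply_of_ne [DecidableEq ι] (a : 𝕜) (ψ : ι → E) {i j : ι} (hij : i ≠ j) :
    naimarkGram a ψ i j = -inner 𝕜 (ψ i) (ψ j) := by
  simp [naimarkGram, hij]

lemma naimarkGram_apply_self [DecidableEq ι] (a : 𝕜) (ψ : ι → E) (i : ι) :
    naimarkGram a ψ i i = a - inner 𝕜 (ψ i) (ψ i) := by
  simp [naimarkGram]

variable [Fintype ι]

lemma ker_gram_mulVecLin (ψ : ι → E) :
    (Matrix.gram 𝕜 ψ).mulVecLin.ker = (Fintype.linearCombination 𝕜 ψ).ker := by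
  ext x
  rw [LinearMap.mem_ker, LinearMap.mem_ker, Fintype.linearCombination_apply,
    Matrix.mulVecLin_apply]
  constructor <;> intro hx
  · rw [← inner_self_eq_zero (𝕜 := 𝕜), ← Matrix.star_dotProduct_gram_mulVec, hx, dotProduct_zero]
  · ext i
    calc (Matrix.gram 𝕜 ψ).mulVec x i = inner 𝕜 (ψ i) (∑ j, x j • ψ j) := by
          simp [Matrix.mulVec, dotProduct, inner_sum, inner_smul_right, mul_comm]
      _ = 0 := by rw [hx, inner_zero_right]

lemma rank_gram (ψ : ι → E) :
    (Matrix.gram 𝕜 ψ).rank = Module.finrank 𝕜 (Submodule.span 𝕜 (Set.range ψ)) := by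
  have hG := (Matrix.gram 𝕜 ψ).mulVecLin.finrank_range_add_finrank_ker
  have hψ := (Fintype.linearCombination 𝕜 ψ).finrank_range_add_finrank_ker
  rw [ker_gram_mulVecLin] at hG
  rw [Fintype.range_linearCombination] at hψ
  exact Nat.add_right_cancel (hG.trans hψ.symm)

lemma gram_mul_self_eq_smul_iff {ψ : ι → E} {a : 𝕜} :
    Matrix.gram 𝕜 ψ * Matrix.gram 𝕜 ψ = a • Matrix.gram 𝕜 ψ ↔
      ∀ i k, ∑ j, (inner 𝕜 (ψ i) (ψ j) : 𝕜) * inner 𝕜 (ψ j) (ψ k) = a * inner 𝕜 (ψ i) (ψ k) := by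
  simp [← Matrix.ext_iff, Matrix.mul_apply]

variable [DecidableEq ι]

lemma gram_mul_self_of_naimarkGram_mul_self {a : 𝕜} {ψ : ι → E}
    (h : naimarkGram a ψ * naimarkGram a ψ = a • naimarkGram a ψ) :
    Matrix.gram 𝕜 ψ * Matrix.gram 𝕜 ψ = a • Matrix.gram 𝕜 ψ := by
  have hG : Matrix.gram 𝕜 ψ = a • 1 - naimarkGram a ψ := by rw [naimarkGram, sub_sub_cancel]
  rw [hG, mul_sub, mul_smul_comm, mul_one, sub_mul, smul_mul_assoc, one_mul, h, sub_self, sub_zero]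

lemma finrank_span_add_rank_naimarkGram {a : 𝕜} (ha : a ≠ 0) {ψ : ι → E}
    (h : Matrix.gram 𝕜 ψ * Matrix.gram 𝕜 ψ = a • Matrix.gram 𝕜 ψ) :
    Module.finrank 𝕜 (Submodule.span 𝕜 (Set.range ψ)) + (naimarkGram a ψ).rank =
      Fintype.card ι := by
  rw [← rank_gram]
  refine matrix_rank_add_rank_eq_card ha ?_ (add_sub_cancel _ _)
  rw [naimarkGram, mul_sub, mul_smul_comm, mul_one, h, sub_self]

end Gram

section RegularSimplex

variable {𝕜 E ι : Type*} [RCLike 𝕜] [NormedAddCommGroup E] [InnerProductSpace 𝕜 E]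

variable (𝕜) in
/-- The triple product (Bargmann invariant) of three vectors of a family: the cyclic product of
their inner products, which is unchanged when the vectors are multiplied by unimodular scalars. -/
def tripleProduct (φ : ι → E) (i j k : ι) : 𝕜 :=
  inner 𝕜 (φ i) (φ j) * inner 𝕜 (φ j) (φ k) * inner 𝕜 (φ k) (φ i)

lemma inner_mul_inner_swap (x y : E) :
    (inner 𝕜 x y * inner 𝕜 y x : 𝕜) = (‖inner 𝕜 x y‖ : 𝕜) ^ 2 := by
  rw [← inner_conj_symm y x, RCLike.mul_conj]

variable {ψ : ι → E} {S C : ℝ}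

lemma naimarkGram_add_apply_self [DecidableEq ι] (C : ℝ) {i : ι}
    (hdiag : (inner 𝕜 (ψ i) (ψ i) : 𝕜) = S) :
    naimarkGram ((S + C : ℝ) : 𝕜) ψ i i = C := by
  rw [naimarkGram_apply_self, hdiag, RCLike.ofReal_add, add_sub_cancel_left]

lemma rank_naimarkGram_le_one_iff [Fintype ι] [DecidableEq ι] (hC : C ≠ 0)
    (hdiag : ∀ i, (inner 𝕜 (ψ i) (ψ i) : 𝕜) = S)
    (hoff : ∀ i j, i ≠ j → ‖(inner 𝕜 (ψ i) (ψ j) : 𝕜)‖ = C) :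
    (naimarkGram ((S + C : ℝ) : 𝕜) ψ).rank ≤ 1 ↔
      ∀ i j k, i ≠ j → j ≠ k → k ≠ i → tripleProduct 𝕜 ψ i j k = -(C : 𝕜) ^ 3 := by
  set M := naimarkGram ((S + C : ℝ) : 𝕜) ψ
  have hC' : (C : 𝕜) ≠ 0 := RCLike.ofReal_ne_zero.2 hC
  have hMdiag : ∀ i, M i i = C := fun i => naimarkGram_add_apply_self C (hdiag i)
  have hMoff : ∀ {i j}, i ≠ j → M i j = -inner 𝕜 (ψ i) (ψ j) := naimarkGram_apply_of_ne _ ψ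
  have hswap : ∀ {i j}, i ≠ j → M i j * M j i = (C : 𝕜) ^ 2 := fun {i j} hij => by
    rw [hMoff hij, hMoff hij.symm, neg_mul_neg, inner_mul_inner_swap, hoff i j hij]
  have htriple : ∀ {i j k}, i ≠ j → j ≠ k → k ≠ i →
      M i j * M j k * M k i = -tripleProduct 𝕜 ψ i j k := fun hij hjk hki => by
    rw [hMoff hij, hMoff hjk, hMoff hki, tripleProduct]
    ring
  rw [matrix_rank_le_one_iff_of_diag_eq hC' hMdiag]
  constructor
  · intro h i j k hij hjk hki
    rw [← neg_eq_iff_eq_neg, ← htriple hij hjk hki, h, mul_assoc, hswap hki.symm]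
    ring
  · intro h i j k
    rcases eq_or_ne i j with rfl | hij
    · rw [hMdiag]
    rcases eq_or_ne j k with rfl | hjk
    · rw [hMdiag, mul_comm]
    rcases eq_or_ne k i with rfl | hki
    · rw [hswap hij, hMdiag, sq]
    have hne : M k i ≠ 0 := left_ne_zero_of_mul (b := M i k) (by simp [hswap hki, hC'])
    refine mul_right_cancel₀ hne ?_
    rw [htriple hij hjk hki, h i j k hij hjk hki, mul_assoc, hswap hki.symm]
    ring

lemma sum_inner_mul_inner_self [Fintype ι]
    (hdiag : ∀ i, (inner 𝕜 (ψ i) (ψ i) : 𝕜) = S)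
    (hoff : ∀ i j, i ≠ j → ‖(inner 𝕜 (ψ i) (ψ j) : 𝕜)‖ = C) (i : ι) :
    ∑ j, (inner 𝕜 (ψ i) (ψ j) : 𝕜) * inner 𝕜 (ψ j) (ψ i) =
      ((S ^ 2 + (Fintype.card ι - 1) * C ^ 2 : ℝ) : 𝕜) := by
  classical
  have hcard : ((Finset.univ.erase i).card : 𝕜) = Fintype.card ι - 1 := by
    rw [Finset.card_erase_of_mem (Finset.mem_univ i), Finset.card_univ,
      Nat.cast_pred (Fintype.card_pos_iff.2 ⟨i⟩)]
  rw [← Finset.add_sum_erase _ _ (Finset.mem_univ i), hdiag,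
    Finset.sum_congr rfl fun j hj => by
      rw [inner_mul_inner_swap, hoff i j (Finset.ne_of_mem_erase hj).symm],
    Finset.sum_const, nsmul_eq_mul, hcard]
  push_cast
  ring

lemma frame_constant_of_regular_simplex [Fintype ι] [DecidableEq ι] {A : ℝ} (hS : 0 < S)
    (hC : 0 < C) (hdiag : ∀ i, (inner 𝕜 (ψ i) (ψ i) : 𝕜) = S)
    (hoff : ∀ i j, i ≠ j → ‖(inner 𝕜 (ψ i) (ψ j) : 𝕜)‖ = C) (hcard : 1 < Fintype.card ι)
    (htight : ∀ i k, ∑ j, (inner 𝕜 (ψ i) (ψ j) : 𝕜) * inner 𝕜 (ψ j) (ψ k) =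
      A * inner 𝕜 (ψ i) (ψ k))
    (hrank : (naimarkGram (A : 𝕜) ψ).rank ≤ 1) :
    A = S + C ∧ S = (Fintype.card ι - 1) * C := by
  obtain ⟨i, j, hij⟩ := Fintype.exists_pair_of_one_lt_card hcard
  have hcard' : (0 : ℝ) < Fintype.card ι - 1 := sub_pos.2 (Nat.one_lt_cast.2 hcard)
  have hnorm : S ^ 2 + (Fintype.card ι - 1) * C ^ 2 = A * S := by
    have h := htight i i
    rw [sum_inner_mul_inner_self hdiag hoff, hdiag] at h
    exact_mod_cast h
  have hminor : (A - S) ^ 2 = C ^ 2 := by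
    have h := matrix_rank_le_one_iff.1 hrank i i j j
    rw [naimarkGram_apply_self, naimarkGram_apply_self, naimarkGram_apply_of_ne _ _ hij,
      naimarkGram_apply_of_ne _ _ hij.symm, neg_mul_neg, inner_mul_inner_swap, hoff i j hij,
      hdiag, hdiag, ← sq] at h
    exact_mod_cast h
  have hAS : 0 < A - S := by
    have : 0 < (A - S) * S := by nlinarith [mul_pos hcard' (pow_pos hC 2)]
    exact pos_of_mul_pos_left this hS.le
  have hA : A - S = C := (pow_left_inj₀ hAS.le hC.le two_ne_zero).1 hminor
  refine ⟨by linarith, mul_right_cancel₀ hC.ne' ?_⟩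
  rw [← hA] at hnorm ⊢
  linarith

lemma gram_mul_self_of_rank_naimarkGram_le_one [Fintype ι] [DecidableEq ι] (hC : C ≠ 0)
    (hdiag : ∀ i, (inner 𝕜 (ψ i) (ψ i) : 𝕜) = S) (hS : S = (Fintype.card ι - 1) * C)
    (hrank : (naimarkGram ((S + C : ℝ) : 𝕜) ψ).rank ≤ 1) :
    Matrix.gram 𝕜 ψ * Matrix.gram 𝕜 ψ = ((S + C : ℝ) : 𝕜) • Matrix.gram 𝕜 ψ := by
  have hmul := (matrix_rank_le_one_iff_of_diag_eq (RCLike.ofReal_ne_zero.2 hC)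
    fun i => naimarkGram_add_apply_self C (hdiag i)).1 hrank
  refine gram_mul_self_of_naimarkGram_mul_self ?_
  ext i k
  rw [Matrix.mul_apply, Finset.sum_congr rfl fun j _ => hmul i j k, Finset.sum_const,
    Finset.card_univ, nsmul_eq_mul, Matrix.smul_apply, smul_eq_mul, ← mul_assoc]
  congr 1
  rw [hS]
  push_cast
  ring

lemma one_lt_card_of_finrank_span_add_one [Fintype ι] (hne : ∀ i, ψ i ≠ 0)
    (h : Module.finrank 𝕜 (Submodule.span 𝕜 (Set.range ψ)) + 1 = Fintype.card ι) :
    1 < Fintype.card ι := by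
  have : Nonempty ι := Fintype.card_pos_iff.1 (by omega)
  have hfin : FiniteDimensional 𝕜 (Submodule.span 𝕜 (Set.range ψ)) :=
    FiniteDimensional.span_of_finite 𝕜 (Set.finite_range ψ)
  have hspan : Module.finrank 𝕜 (Submodule.span 𝕜 (Set.range ψ)) ≠ 0 := fun h0 =>
    let i := Classical.arbitrary ι
    hne i (Submodule.span_eq_bot.1 (Submodule.finrank_eq_zero.1 h0) _ ⟨i, rfl⟩)
  omega

theorem isETF_and_finrank_span_add_one_iff [Fintype ι] (hS : 0 < S) (hC : 0 < C)
    (hdiag : ∀ i, (inner 𝕜 (ψ i) (ψ i) : 𝕜) = S)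
    (hoff : ∀ i j, i ≠ j → ‖(inner 𝕜 (ψ i) (ψ j) : 𝕜)‖ = C) :
    (IsETF 𝕜 ψ ∧ Module.finrank 𝕜 (Submodule.span 𝕜 (Set.range ψ)) + 1 = Fintype.card ι) ↔
      S = (Fintype.card ι - 1) * C ∧
        ∀ i j k, i ≠ j → j ≠ k → k ≠ i → tripleProduct 𝕜 ψ i j k = -(C : 𝕜) ^ 3 := by
  classical
  rw [← rank_naimarkGram_le_one_iff hC.ne' hdiag hoff]
  constructor
  · rintro ⟨⟨-, -, A, hA, htight⟩, hspan⟩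
    have hne : ∀ i, ψ i ≠ 0 := fun i hi => hS.ne' (by simpa [hi] using (hdiag i).symm)
    have hrank : (naimarkGram (A : 𝕜) ψ).rank ≤ 1 := by
      have := finrank_span_add_rank_naimarkGram (RCLike.ofReal_ne_zero.2 hA.ne')
        (gram_mul_self_eq_smul_iff.2 htight)
      omega
    obtain ⟨rfl, hScard⟩ := frame_constant_of_regular_simplex hS hC hdiag hoff
      (one_lt_card_of_finrank_span_add_one hne hspan) htight hrank
    exact ⟨hScard, hrank⟩
  · rintro ⟨hScard, hrank⟩
    have htight := gram_mul_self_of_rank_naimarkGram_le_one hC.ne' hdiag hScard hrank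
    have hSC : 0 < S + C := add_pos hS hC
    refine ⟨⟨⟨S, hS, hdiag⟩, ⟨C, hC, hoff⟩, S + C, hSC, gram_mul_self_eq_smul_iff.1 htight⟩, ?_⟩
    have : Nonempty ι := by
      by_contra hempty
      simp only [not_nonempty_iff] at hempty
      rw [Fintype.card_eq_zero] at hScard
      norm_num at hScard
      linarith
    have hM : naimarkGram ((S + C : ℝ) : 𝕜) ψ ≠ 0 := fun h0 => hC.ne' <| by
      have := naimarkGram_add_apply_self C (hdiag (Classical.arbitrary ι))
      rw [h0, Matrix.zero_apply] at this
      exact_mod_cast this.symm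
    have hrank_pos := Nat.pos_of_ne_zero (mt matrix_rank_eq_zero_iff.1 hM)
    have hsum := finrank_span_add_rank_naimarkGram (RCLike.ofReal_ne_zero.2 hSC.ne') htight
    omega

theorem isRegularSimplex_iff [Fintype ι] {φ : ι → E} (hS : 0 < S) (hC : 0 < C)
    (hdiag : ∀ i, (inner 𝕜 (φ i) (φ i) : 𝕜) = S)
    (hoff : ∀ i j, i ≠ j → ‖(inner 𝕜 (φ i) (φ j) : 𝕜)‖ = C) (K : Finset ι) :
    IsRegularSimplex 𝕜 φ K ↔ S = (K.card - 1) * C ∧ ∀ i ∈ K, ∀ j ∈ K, ∀ k ∈ K,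
      i ≠ j → j ≠ k → k ≠ i → tripleProduct 𝕜 φ i j k = -(C : 𝕜) ^ 3 := by
  have h := isETF_and_finrank_span_add_one_iff (𝕜 := 𝕜) (ψ := fun k : K => φ k) hS hC
    (fun i => hdiag i) (fun i j hij => hoff i j (Subtype.coe_injective.ne hij))
  rw [Fintype.card_coe] at h
  rw [IsRegularSimplex, Set.image_eq_range]
  refine h.trans (and_congr_right fun _ => ?_)
  simp only [Subtype.forall, ne_eq, Subtype.mk.injEq, tripleProduct]

end RegularSimplex

section AlternatingForm

variable {R V : Type*} [CommRing R] [AddCommGroup V] [Module R V] {B : V →ₗ[R] V →ₗ[R] R}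

lemma isAlt_cyclic_sum (hB : B.IsAlt) (u v w : V) :
    B u v + B v w + B w u = B (u - w) (v - w) := by
  simp only [map_sub, LinearMap.sub_apply, hB w, ← hB.neg u w, ← hB.neg w v]
  ring

lemma tripleProduct_of_addChar (hB : B.IsAlt) (χ : AddChar R ℂ) {E : Type*}
    [NormedAddCommGroup E] [InnerProductSpace ℂ E] {Φ : V → E}
    (hoff : ∀ v w, v ≠ w → inner ℂ (Φ v) (Φ w) = χ (B v w)) {u v w : V}
    (huv : u ≠ v) (hvw : v ≠ w) (hwu : w ≠ u) :
    tripleProduct ℂ Φ u v w = χ (B (u - w) (v - w)) := by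
  rw [tripleProduct, hoff u v huv, hoff v w hvw, hoff w u hwu, ← isAlt_cyclic_sum hB,
    AddChar.map_add_eq_mul, AddChar.map_add_eq_mul]

theorem mem_binder_iff_of_addChar [Finite R] [Fintype V] (hB : B.IsAlt) (χ : AddChar R ℂ)
    {E : Type*} [NormedAddCommGroup E] [InnerProductSpace ℂ E] {Φ : V → E} {n : ℕ} (hn : 0 < n)
    (hdiag : ∀ v, inner ℂ (Φ v) (Φ v) = (n : ℂ))
    (hoff : ∀ v w, v ≠ w → inner ℂ (Φ v) (Φ w) = χ (B v w)) (K : Finset V) :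
    K ∈ binder ℂ Φ ↔ K.card = n + 1 ∧ ∀ u ∈ K, ∀ v ∈ K, ∀ w ∈ K,
      u ≠ v → v ≠ w → w ≠ u → χ (B (u - w) (v - w)) = -1 := by
  have hnorm : ∀ v w, v ≠ w → ‖inner ℂ (Φ v) (Φ w)‖ = 1 := fun v w hvw => by
    rw [hoff v w hvw, AddChar.norm_apply]
  have hcard : (n : ℝ) = (K.card - 1) * 1 ↔ K.card = n + 1 := by
    rw [mul_one, eq_sub_iff_add_eq, eq_comm]
    norm_cast
  refine (isRegularSimplex_iff (Nat.cast_pos.2 hn) one_pos (fun v => by rw [hdiag v]; simp)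
    hnorm K).trans (and_congr hcard ?_)
  refine forall₂_congr fun u _ => forall₂_congr fun v _ => forall₂_congr fun w _ =>
    forall₃_congr fun huv hvw hwu => ?_
  rw [tripleProduct_of_addChar hB χ hoff huv hvw hwu, RCLike.ofReal_one, one_pow]

end AlternatingForm

lemma addChar_apply_ne_neg_one {G M : Type*} [AddGroup G] [Ring M] [NeZero (2 : M)]
    (hG : Odd (Nat.card G)) (χ : AddChar G M) (x : G) : χ x ≠ -1 := fun h =>
  two_ne_zero <| calc
    (2 : M) = 1 - χ x ^ Nat.card G := by
      rw [h, hG.neg_one_pow, sub_neg_eq_add, one_add_one_eq_two]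
    _ = 0 := by
      rw [← AddChar.map_nsmul_eq_pow, card_nsmul_eq_zero', AddChar.map_zero_eq_one, sub_self]

lemma stdAddChar_zmod_two_eq_neg_one_iff (x : ZMod 2) : ZMod.stdAddChar x = (-1 : ℂ) ↔ x = 1 := by
  have hone : ZMod.stdAddChar (1 : ZMod 2) = (-1 : ℂ) := by
    rw [ZMod.stdAddChar_apply, ZMod.toCircle_apply, ← Complex.exp_pi_mul_I, ZMod.val_one]
    congr 1
    push_cast
    ring
  rw [← hone, ZMod.injective_stdAddChar.eq_iff]

section CharTwo

variable {V : Type*} [AddCommGroup V] [Module (ZMod 2) V] [DecidableEq V]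
  {B : V →ₗ[ZMod 2] V →ₗ[ZMod 2] ZMod 2}

lemma isAlt_apply_sub_sub_eq_one_of_mem_insert_zero (hB : B.IsAlt) {S : Finset V}
    (hS : ∀ a ∈ S, ∀ b ∈ S, a ≠ b → B a b = 1) {a b c : V} (ha : a ∈ insert 0 S)
    (hb : b ∈ insert 0 S) (hc : c ∈ insert 0 S) (hab : a ≠ b) (hbc : b ≠ c) (hca : c ≠ a) :
    B (a - c) (b - c) = 1 := by
  have hthree : (1 + 1 + 1 : ZMod 2) = 1 := rfl
  rw [← isAlt_cyclic_sum hB]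
  rw [Finset.mem_insert] at ha hb hc
  rcases ha with rfl | ha <;> rcases hb with rfl | hb <;> rcases hc with rfl | hc
  · exact absurd rfl hab
  · exact absurd rfl hab
  · exact absurd rfl hca
  · simp [hS b hb c hc hbc]
  · exact absurd rfl hbc
  · simp [hS c hc a ha hca]
  · simp [hS a ha b hb hab]
  · rw [hS a ha b hb hab, hS b hb c hc hbc, hS c hc a ha hca, hthree]

theorem forall_apply_sub_sub_eq_one_iff_exists_translate (hB : B.IsAlt) {n : ℕ} (hn : 1 < n)
    (K : Finset V) :
    (K.card = n + 1 ∧ ∀ u ∈ K, ∀ v ∈ K, ∀ w ∈ K,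
      u ≠ v → v ≠ w → w ≠ u → B (u - w) (v - w) = 1) ↔
    ∃ (v : V) (S : Finset V), S.card = n ∧ (∀ a ∈ S, ∀ b ∈ S, a ≠ b → B a b = 1) ∧
      K = (insert (0 : V) S).image (fun s => v + s) := by
  constructor
  · rintro ⟨hcard, hK⟩
    obtain ⟨w, hw⟩ : K.Nonempty := Finset.card_pos.1 (by omega)
    refine ⟨w, (K.erase w).image (· - w), ?_, ?_, ?_⟩
    · rw [Finset.card_image_of_injective _ sub_left_injective, Finset.card_erase_of_mem hw, hcard,
        Nat.add_sub_cancel]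
    · simp only [Finset.forall_mem_image, Finset.mem_erase]
      rintro u ⟨huw, hu⟩ v ⟨hvw, hv⟩ huv
      exact hK u hu v hv w hw (fun h => huv (h ▸ rfl)) hvw huw.symm
    · rw [Finset.image_insert, Finset.image_image, add_zero]
      simp [Function.comp_def, Finset.insert_erase hw]
  · rintro ⟨v, S, hcard, hS, rfl⟩
    have h0 : (0 : V) ∉ S := fun h0 => by
      obtain ⟨b, hb, hb0⟩ := Finset.exists_mem_ne (by omega : 1 < S.card) 0
      simpa using hS 0 h0 b hb hb0.symm
    refine ⟨?_, ?_⟩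
    · rw [Finset.card_image_of_injective _ (add_right_injective v), Finset.card_insert_of_notMem h0,
        hcard]
    · simp only [Finset.forall_mem_image, add_sub_add_left_eq_sub, ne_eq, add_right_inj]
      exact fun a ha b hb c hc =>
        isAlt_apply_sub_sub_eq_one_of_mem_insert_zero hB hS ha hb hc

end CharTwo

theorem binder_of_symplectic_ETF_general
    {P n : ℕ} [NeZero P] (hn : 1 < n)
    {V : Type*} [AddCommGroup V] [Module (ZMod P) V] [Fintype V] [DecidableEq V]
    {B : V →ₗ[ZMod P] V →ₗ[ZMod P] ZMod P} (hB : B.IsAlt)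
    {E : Type*} [NormedAddCommGroup E] [InnerProductSpace ℂ E] {Φ : V → E}
    (hdiag : ∀ v, (inner ℂ (Φ v) (Φ v) : ℂ) = n)
    (hoff : ∀ v₁ v₂ : V, v₁ ≠ v₂ → (inner ℂ (Φ v₁) (Φ v₂) : ℂ) =
      Complex.exp (2 * Real.pi * Complex.I * ((B v₁ v₂).val : ℂ) / (P : ℂ))) :
    (Odd P → binder ℂ Φ = ∅) ∧
    (P = 2 → binder ℂ Φ = {K : Finset V | ∃ (v : V) (S : Finset V),
      S.card = n ∧
      (∀ v₁ ∈ S, ∀ v₂ ∈ S, v₁ ≠ v₂ → B v₁ v₂ = 1) ∧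
      K = (insert (0 : V) S).image (fun s => v + s)}) := by
  have hmem := mem_binder_iff_of_addChar hB ZMod.stdAddChar (by omega) hdiag
    (fun v w hvw => by rw [hoff v w hvw, ZMod.stdAddChar_apply, ZMod.toCircle_apply])
  constructor
  · intro hP
    refine Set.eq_empty_of_forall_notMem fun K hK => ?_
    obtain ⟨hcard, htriple⟩ := (hmem K).1 hK
    obtain ⟨u, hu, v, hv, w, hw, huv, huw, hvw⟩ :=
      Finset.two_lt_card.1 (by omega : 2 < K.card)
    exact addChar_apply_ne_neg_one (by rwa [Nat.card_zmod]) _ _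
      (htriple u hu v hv w hw huv hvw huw.symm)
  · rintro rfl
    ext K
    simp only [hmem, stdAddChar_zmod_two_eq_neg_one_iff]
    exact forall_apply_sub_sub_eq_one_iff_exists_translate hB hn K

/-- The binder of a symplectic ETF is empty when `P > 2`; when
`P = 2` it consists exactly of the sets `v + ({0} ∪ S)` where `#S = 2^J + 1`
and `B(v₁,v₂) = 1` for all distinct `v₁, v₂ ∈ S`. -/
theorem binder_of_symplectic_ETF
    {P J : ℕ} [Fact (Nat.Prime P)] (hJ : 0 < J)
    {V : Type*} [AddCommGroup V] [Module (ZMod P) V] [Fintype V] [DecidableEq V]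
    (hdim : Module.finrank (ZMod P) V = 2 * J)
    (B : V →ₗ[ZMod P] V →ₗ[ZMod P] ZMod P) (hB : IsSymplectic B)
    {E : Type*} [NormedAddCommGroup E] [InnerProductSpace ℂ E]
    (Φ : V → E)
    (hdiag : ∀ v, (inner ℂ (Φ v) (Φ v) : ℂ) = ((P : ℂ) ^ J + 1))
    (hoff : ∀ v₁ v₂ : V, v₁ ≠ v₂ → (inner ℂ (Φ v₁) (Φ v₂) : ℂ) =
      Complex.exp (2 * Real.pi * Complex.I * ((B v₁ v₂).val : ℂ) / (P : ℂ))) :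
    (2 < P → binder ℂ Φ = ∅) ∧
    (P = 2 → binder ℂ Φ = {K : Finset V | ∃ (v : V) (S : Finset V),
      S.card = 2 ^ J + 1 ∧
      (∀ v₁ ∈ S, ∀ v₂ ∈ S, v₁ ≠ v₂ → B v₁ v₂ = 1) ∧
      K = (insert (0 : V) S).image (fun s => v + s)}) := by
  have hPJ : 1 < P ^ J + 1 := Nat.succ_lt_succ (pow_pos (NeZero.pos P) J)
  obtain ⟨hodd, htwo⟩ := binder_of_symplectic_ETF_general hPJ hB.1
    (fun v => by rw [hdiag v]; push_cast; rfl) hoff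
  exact ⟨fun hP => hodd ((Fact.out : P.Prime).odd_of_ne_two hP.ne'), by rintro rfl; exact htwo rfl⟩
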